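/- Let n jobs be given, where job j has processing time p_j ∈ ℕ, weight w_j ∈ ℕ, release date r_j ∈ ℕ and due date d_j ∈ ℕ. For J ⊆ {1,…,n}, t ∈ ℕ∞ and ε ∈ ℤ, define OPT[J,t,ε] ∈ ℕ∞ as the minimum makespan over all schedules of J starting at time t whose weighted number of late jobs ∑_{j∈J} w_j·𝟙[C_j > d_j] equals ε (∞ if t = ∞, if ε < 0, or if no such schedule exists). Then for every J ⊆ {1,…,n} of even cardinality |J| ≥ 2, every t ∈ ℕ and every ε ∈ ℤ, OPT[J,t,ε] = min over all ε' ∈ ℤ with 0 ≤ ε' ≤ ε and all X ⊆ J with |X| = |J|/2 of OPT[X, OPT[J∖X, t, ε − ε'], ε']. -/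

import Mathlib

/-- `ValidFrom p r t s` : the list `s` of pairs (job, completion time) is a valid
schedule starting at time `t` : the first job `j` satisfies
`C_j ≥ max t (r j) + p j`, and each further job `j` satisfies
`C_j ≥ max C_prev (r j) + p j` (idle time is allowed). -/
def ValidFrom {n : ℕ} (p r : Fin n → ℕ) : ℕ → List (Fin n × ℕ) → Prop
  | _, [] => True
  | t, (j, c) :: s => max t (r j) + p j ≤ c ∧ ValidFrom p r c s

/-- The makespan of a schedule : the completion time of its last job. -/
def makespan {n : ℕ} (s : List (Fin n × ℕ)) : ℕ :=
  ((s.map Prod.snd).getLast?).getD 0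

/-- The weighted number of late jobs `∑_j w j * 𝟙[C_j > d j]` of a schedule. -/
def lateWeight {n : ℕ} (w d : Fin n → ℕ) (s : List (Fin n × ℕ)) : ℕ :=
  (s.map fun jc => if d jc.1 < jc.2 then w jc.1 else 0).sum

/-- `OPT p w r d J t ε` : minimum makespan over all schedules of the jobs of `J`
starting at time `t` whose weighted number of late jobs equals `ε`
(`⊤` if `t = ⊤`, if `ε < 0`, or if no such schedule exists). -/
noncomputable def OPT {n : ℕ} (p w r d : Fin n → ℕ) (J : Finset (Fin n))
    (t : ℕ∞) (ε : ℤ) : ℕ∞ :=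
  sInf { v : ℕ∞ | ∃ t₀ : ℕ, (t₀ : ℕ∞) = t ∧ ∃ s : List (Fin n × ℕ),
    (s.map Prod.fst).Nodup ∧ (s.map Prod.fst).toFinset = J ∧
    ValidFrom p r t₀ s ∧ (lateWeight w d s : ℤ) = ε ∧ v = (makespan s : ℕ∞) }



theorem ValidFrom.anti_start {n : ℕ} {p r : Fin n → ℕ} {t t' : ℕ} (h : t' ≤ t)
    {s : List (Fin n × ℕ)} (hs : ValidFrom p r t s) : ValidFrom p r t' s := by
  cases s with
  | nil => trivial
  | cons a s => exact ⟨by have := hs.1; omega, hs.2⟩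

theorem makespan_append {n : ℕ} (s₁ : List (Fin n × ℕ)) {s₂ : List (Fin n × ℕ)}
    (h : s₂ ≠ []) : makespan (s₁ ++ s₂) = makespan s₂ := by
  obtain ⟨s, a, rfl⟩ := (List.eq_nil_or_concat' s₂).resolve_left h
  simp [makespan, ← List.append_assoc]

theorem validFrom_append {n : ℕ} {p r : Fin n → ℕ} {t : ℕ} {s₁ s₂ : List (Fin n × ℕ)}
    (h : s₁ ≠ []) : ValidFrom p r t (s₁ ++ s₂) ↔
      ValidFrom p r t s₁ ∧ ValidFrom p r (makespan s₁) s₂ := by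
  induction s₁ generalizing t with
  | nil => exact absurd rfl h
  | cons a s ih =>
    obtain ⟨j, c⟩ := a
    rcases eq_or_ne s [] with rfl | hs
    · simp [ValidFrom, makespan]
    · have hm : makespan ((j, c) :: s) = makespan s := makespan_append [(j, c)] hs
      simp [ValidFrom, hm, ih hs, and_assoc]

theorem lateWeight_append {n : ℕ} (w d : Fin n → ℕ) (s₁ s₂ : List (Fin n × ℕ)) :
    lateWeight w d (s₁ ++ s₂) = lateWeight w d s₁ + lateWeight w d s₂ := by
  simp [lateWeight]

theorem OPT_le_makespan {n : ℕ} {p w r d : Fin n → ℕ} {J : Finset (Fin n)} {t : ℕ} {ε : ℤ}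
    {s : List (Fin n × ℕ)} (hnd : (s.map Prod.fst).Nodup)
    (hJ : (s.map Prod.fst).toFinset = J) (hv : ValidFrom p r t s)
    (hw : (lateWeight w d s : ℤ) = ε) : OPT p w r d J t ε ≤ makespan s :=
  sInf_le ⟨t, rfl, s, hnd, hJ, hv, hw, rfl⟩

theorem exists_schedule_of_OPT_ne_top {n : ℕ} {p w r d : Fin n → ℕ} {J : Finset (Fin n)}
    {t : ℕ∞} {ε : ℤ} (h : OPT p w r d J t ε ≠ ⊤) :
    ∃ t₀ : ℕ, (t₀ : ℕ∞) = t ∧ ∃ s : List (Fin n × ℕ),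
      (s.map Prod.fst).Nodup ∧ (s.map Prod.fst).toFinset = J ∧ ValidFrom p r t₀ s ∧
      (lateWeight w d s : ℤ) = ε ∧ OPT p w r d J t ε = makespan s := by
  have hne : { v : ℕ∞ | ∃ t₀ : ℕ, (t₀ : ℕ∞) = t ∧ ∃ s : List (Fin n × ℕ),
      (s.map Prod.fst).Nodup ∧ (s.map Prod.fst).toFinset = J ∧ ValidFrom p r t₀ s ∧
      (lateWeight w d s : ℤ) = ε ∧ v = (makespan s : ℕ∞) }.Nonempty :=
    Set.nonempty_iff_ne_empty.2 fun he => h (by rw [OPT, he, sInf_empty])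
  exact csInf_mem hne

/-- Concatenating optimal schedules of `J \ X` and of a nonempty `X` schedules `J`. -/
theorem OPT_le_OPT_OPT_sdiff {n : ℕ} (p w r d : Fin n → ℕ) {J X : Finset (Fin n)}
    (hX : X ⊆ J) (hne : X.Nonempty) (hne' : (J \ X).Nonempty) (t : ℕ) (ε ε' : ℤ) :
    OPT p w r d J t ε ≤ OPT p w r d X (OPT p w r d (J \ X) t (ε - ε')) ε' := by
  by_cases htop : OPT p w r d X (OPT p w r d (J \ X) t (ε - ε')) ε' = ⊤
  · exact htop ▸ le_top
  obtain ⟨T, hT, s₂, hnd₂, hJ₂, hv₂, hw₂, hopt₂⟩ := exists_schedule_of_OPT_ne_top htop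
  obtain ⟨t', ht', s₁, hnd₁, hJ₁, hv₁, hw₁, hopt₁⟩ :=
    exists_schedule_of_OPT_ne_top (hT ▸ ENat.natCast_ne_top T)
  obtain rfl : t' = t := by exact_mod_cast ht'
  obtain rfl : T = makespan s₁ := by exact_mod_cast hT.trans hopt₁
  have hs₁ : s₁ ≠ [] := by rintro rfl; simp [← hJ₁] at hne'
  have hs₂ : s₂ ≠ [] := by rintro rfl; simp [← hJ₂] at hne
  rw [hopt₂, ← makespan_append s₁ hs₂]
  refine OPT_le_makespan ?_ ?_ ((validFrom_append hs₁).2 ⟨hv₁, hv₂⟩) ?_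
  · rw [List.map_append, List.nodup_append']
    refine ⟨hnd₁, hnd₂, ?_⟩
    rw [← List.disjoint_toFinset_iff_disjoint, hJ₁, hJ₂]
    exact Finset.sdiff_disjoint
  · rw [List.map_append, List.toFinset_append, hJ₁, hJ₂, Finset.sdiff_union_of_subset hX]
  · rw [lateWeight_append]
    push_cast
    omega

/-- Running a tail schedule after an optimal schedule of the jobs preceding it. -/
theorem OPT_OPT_le_makespan_append {n : ℕ} {p w r d : Fin n → ℕ} {t : ℕ}
    {s₁ s₂ : List (Fin n × ℕ)} (hs₁ : s₁ ≠ []) (hs₂ : s₂ ≠ [])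
    (hnd : ((s₁ ++ s₂).map Prod.fst).Nodup) (hv : ValidFrom p r t (s₁ ++ s₂)) :
    OPT p w r d (s₂.map Prod.fst).toFinset
      (OPT p w r d (s₁.map Prod.fst).toFinset t (lateWeight w d s₁)) (lateWeight w d s₂) ≤
      makespan (s₁ ++ s₂) := by
  rw [List.map_append, List.nodup_append'] at hnd
  obtain ⟨hv₁, hv₂⟩ := (validFrom_append hs₁).1 hv
  have hle : OPT p w r d (s₁.map Prod.fst).toFinset t (lateWeight w d s₁) ≤ makespan s₁ :=
    OPT_le_makespan hnd.1 rfl hv₁ rfl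
  obtain ⟨T, hT⟩ := ENat.ne_top_iff_exists.1 (ne_top_of_le_ne_top (ENat.natCast_ne_top _) hle)
  rw [← hT] at hle ⊢
  rw [makespan_append s₁ hs₂]
  exact OPT_le_makespan hnd.2.1 rfl (hv₂.anti_start (by exact_mod_cast hle)) rfl

theorem stmt7 {n : ℕ} (p w r d : Fin n → ℕ) (J : Finset (Fin n))
    (hJcard : 2 ≤ J.card) (hJeven : Even J.card) (t : ℕ) (ε : ℤ) :
    OPT p w r d J (t : ℕ∞) ε =
      ⨅ (ε' : ℤ) (_ : 0 ≤ ε' ∧ ε' ≤ ε) (X : Finset (Fin n))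
          (_ : X ⊆ J ∧ X.card = J.card / 2),
        OPT p w r d X (OPT p w r d (J \ X) (t : ℕ∞) (ε - ε')) ε' := by
  apply le_antisymm
  · refine le_iInf₂ fun ε' _ => le_iInf₂ fun X hX => ?_
    have hcard := Finset.card_sdiff_of_subset hX.1
    exact OPT_le_OPT_OPT_sdiff p w r d hX.1 (Finset.card_pos.1 (by omega))
      (Finset.card_pos.1 (by omega)) t ε ε'
  · by_cases htop : OPT p w r d J t ε = ⊤
    · exact htop ▸ le_top
    obtain ⟨t', ht', s, hnd, rfl, hv, rfl, hopt⟩ := exists_schedule_of_OPT_ne_top htop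
    obtain rfl : t' = t := by exact_mod_cast ht'
    rw [hopt]
    rw [List.toFinset_card_of_nodup hnd, List.length_map] at *
    obtain ⟨s₁, s₂, rfl, hlen⟩ : ∃ s₁ s₂, s = s₁ ++ s₂ ∧ s₁.length = s.length / 2 :=
      ⟨s.take (s.length / 2), s.drop (s.length / 2), (List.take_append_drop _ _).symm, by
        rw [List.length_take]; omega⟩
    rw [List.length_append] at *
    have hs₁ : s₁ ≠ [] := List.length_pos_iff.1 (by omega)
    have hs₂ : s₂ ≠ [] := List.length_pos_iff.1 (by
      obtain ⟨k, hk⟩ := hJeven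
      omega)
    have key := OPT_OPT_le_makespan_append (w := w) (d := d) hs₁ hs₂ hnd hv
    rw [List.map_append, List.nodup_append'] at hnd
    have hdisj : Disjoint (s₁.map Prod.fst).toFinset (s₂.map Prod.fst).toFinset :=
      List.disjoint_toFinset_iff_disjoint.2 hnd.2.2
    have hw := lateWeight_append w d s₁ s₂
    refine (iInf₂_le_of_le (lateWeight w d s₂ : ℤ) ⟨by omega, by omega⟩ <|
      iInf₂_le_of_le (s₂.map Prod.fst).toFinset ⟨?_, ?_⟩ ?_)
    · rw [List.map_append, List.toFinset_append]
      exact Finset.subset_union_right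
    · rw [List.toFinset_card_of_nodup hnd.2.1, List.length_map]
      obtain ⟨k, hk⟩ := hJeven
      omega
    · rw [List.map_append, List.toFinset_append, Finset.union_sdiff_cancel_right hdisj, hw,
        Nat.cast_add, add_sub_cancel_right]
      exact key
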